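/- The ideal I = (∂₁W, ∂₂W, ∂₃W) generated by the partial derivatives of W in the formal power series ring ℂ[[v₁,v₂,v₃]] has finite codimension: the quotient ℂ[[v₁,v₂,v₃]]/I is a finite-dimensional complex vector space. -/

import Mathlib

open MvPowerSeries

/-- The partial derivatives `∂₁W = -v₂v₃ + 5v₁⁴`, `∂₂W = -v₁v₃ + 5v₂⁴`,
`∂₃W = -v₁v₂ + 5v₃⁴` of `W = -v₁v₂v₃ + v₁⁵ + v₂⁵ + v₃⁵`, as formal power series. -/
noncomputable def dW : Fin 3 → MvPowerSeries (Fin 3) ℂ :=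
  ![ - (X 1 * X 2) + 5 * X 0 ^ 4,
     - (X 0 * X 2) + 5 * X 1 ^ 4,
     - (X 0 * X 1) + 5 * X 2 ^ 4 ]

/-- The Jacobian ideal `I = (∂₁W, ∂₂W, ∂₃W) ⊂ ℂ[[v₁,v₂,v₃]]`. -/
noncomputable def JacobianIdeal : Ideal (MvPowerSeries (Fin 3) ℂ) :=
  Ideal.span {dW 0, dW 1, dW 2}

/-!
Modulo the Jacobian ideal, `v₂v₃`, `v₁v₃` and `v₁v₂` are unit multiples of `v₁⁴`, `v₂⁴` and `v₃⁴`.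
Expanding `v₁v₂v₃²` in two ways turns these relations into an identity between unit multiples of
`v₃⁶` and `v₃¹⁶`. As `v₃` lies in the Jacobson radical of the power series ring, this forces
`v₃⁶ = 0`; by symmetry all three variables are nilpotent in the quotient, which is therefore spanned
by finitely many monomials.
-/

section ThreeRelations

variable {A : Type*} [CommRing A] {x y z a b c : A} {k : ℕ}

theorem mul_pow_add_two_eq_of_mul_eq_mul_pow (hx : y * z = a * x ^ k) (hy : x * z = b * y ^ k)
    (hz : x * y = c * z ^ k) : c * z ^ (k + 2) = a * b * c ^ k * z ^ (k ^ 2) :=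
  calc
    c * z ^ (k + 2) = c * z ^ k * z ^ 2 := by ring
    _ = (y * z) * (x * z) := by rw [← hz]; ring
    _ = a * b * (x * y) ^ k := by rw [hx, hy]; ring
    _ = a * b * c ^ k * z ^ (k ^ 2) := by rw [hz]; ring

theorem pow_add_two_eq_zero_of_mul_eq_mul_pow (hk : 3 ≤ k) (hc : IsUnit c)
    (hzJ : z ∈ Ring.jacobson A) (hx : y * z = a * x ^ k) (hy : x * z = b * y ^ k)
    (hz : x * y = c * z ^ k) : z ^ (k + 2) = 0 := by
  obtain ⟨n, rfl⟩ := Nat.exists_eq_add_of_le' hk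
  -- the exponents come from `k ^ 2 = (k + 2) + 1 + (n ^ 2 + 5 * n + 3)` for `k = n + 3`
  have hunit : IsUnit (c * (z * -(a * b * c ^ (n + 2) * z ^ (n ^ 2 + 5 * n + 3)) + 1)) :=
    hc.mul (Ideal.mem_jacobson_bot.1 (Ideal.jacobson_bot (R := A) ▸ hzJ) _)
  refine hunit.mul_right_eq_zero.1 ?_
  linear_combination mul_pow_add_two_eq_of_mul_eq_mul_pow hx hy hz

theorem pow_add_two_mem_of_neg_mul_add_mul_pow_mem {I : Ideal A} (hk : 3 ≤ k) (hc : IsUnit c)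
    (hzJ : z ∈ Ring.jacobson A) (hx : -(y * z) + a * x ^ k ∈ I) (hy : -(x * z) + b * y ^ k ∈ I)
    (hz : -(x * y) + c * z ^ k ∈ I) : z ^ (k + 2) ∈ I := by
  let π := Ideal.Quotient.mk I
  have mk_mul_eq {u v w d : A} (h : -(u * v) + d * w ^ k ∈ I) : π u * π v = π d * π w ^ k := by
    rw [← map_mul, ← map_pow, ← map_mul, eq_comm, Ideal.Quotient.mk_eq_mk_iff_sub_mem,
      sub_eq_neg_add]
    exact h
  have mk_pow_eq_zero : π z ^ (k + 2) = 0 :=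
    pow_add_two_eq_zero_of_mul_eq_mul_pow hk (hc.map π) (Ring.le_comap_jacobson π hzJ)
      (mk_mul_eq hx) (mk_mul_eq hy) (mk_mul_eq hz)
  rwa [← map_pow, Ideal.Quotient.eq_zero_iff_mem] at mk_pow_eq_zero

end ThreeRelations

section PowerSeries

variable {σ R : Type*} [CommRing R]

theorem X_mem_jacobson (i : σ) : (X i : MvPowerSeries σ R) ∈ Ring.jacobson (MvPowerSeries σ R) := by
  rw [← Ideal.jacobson_bot, Ideal.mem_jacobson_bot]
  intro f
  simp [MvPowerSeries.isUnit_iff_constantCoeff]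

theorem mem_of_forall_X_pow_mem_of_coeff_eq_zero {I : Ideal (MvPowerSeries σ R)} {n : σ → ℕ}
    {s : Finset σ} (hI : ∀ i ∈ s, X i ^ n i ∈ I) {f : MvPowerSeries σ R}
    (hf : ∀ m : σ →₀ ℕ, (∀ i ∈ s, m i < n i) → coeff m f = 0) : f ∈ I := by
  induction s using Finset.cons_induction generalizing f with
  | empty =>
    have hf0 : f = 0 := MvPowerSeries.ext fun m => hf m (by simp)
    exact hf0 ▸ I.zero_mem
  | cons j s hj ih =>
    let low : MvPowerSeries σ R := fun m => if m j < n j then coeff m f else 0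
    have coeff_low (m : σ →₀ ℕ) : coeff m low = if m j < n j then coeff m f else 0 := rfl
    have low_mem : low ∈ I := by
      refine ih (fun i hi => hI i (Finset.mem_cons_of_mem hi)) fun m hm => ?_
      rw [coeff_low]
      split_ifs with hmj
      · exact hf m (Finset.forall_mem_cons hj _ |>.2 ⟨hmj, hm⟩)
      · rfl
    have X_pow_dvd_sub : X j ^ n j ∣ f - low :=
      X_pow_dvd_iff.2 fun m hm => by rw [map_sub, coeff_low, if_pos hm, sub_self]
    have sub_mem : f - low ∈ I :=
      I.mem_of_dvd X_pow_dvd_sub (hI j (Finset.mem_cons_self j s))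
    simpa only [sub_add_cancel] using I.add_mem sub_mem low_mem

theorem finite_quotient_of_forall_X_mem_radical [Finite σ] {I : Ideal (MvPowerSeries σ R)}
    (hI : ∀ i, X i ∈ I.radical) : Module.Finite R (MvPowerSeries σ R ⧸ I) := by
  classical
  have := Fintype.ofFinite σ
  choose n hn using hI
  let N : σ →₀ ℕ := Finsupp.equivFunOnFinite.symm n
  let π := Ideal.Quotient.mkₐ R I
  let v (m : σ →₀ ℕ) : MvPowerSeries σ R ⧸ I := π (monomial m 1)
  have mk_eq_sum (f : MvPowerSeries σ R) : π f = ∑ m ∈ Finset.Iic N, coeff m f • v m := by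
    have sub_mem : f - ∑ m ∈ Finset.Iic N, coeff m f • monomial m 1 ∈ I := by
      refine mem_of_forall_X_pow_mem_of_coeff_eq_zero (s := Finset.univ) (fun i _ => hn i) ?_
      intro m hm
      have hmN : m ≤ N := fun i => (hm i (Finset.mem_univ i)).le
      simp [coeff_monomial, hmN]
    simp only [v, ← map_smul π, ← map_sum]
    exact Ideal.Quotient.mk_eq_mk_iff_sub_mem _ _ |>.2 sub_mem
  have span_eq_top : Submodule.span R (v '' Set.Iic N) = ⊤ := by
    refine Submodule.eq_top_iff'.2 fun q => ?_
    obtain ⟨f, rfl⟩ := Ideal.Quotient.mkₐ_surjective R I q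
    rw [mk_eq_sum]
    exact Submodule.sum_mem _ fun m hm => Submodule.smul_mem _ _
      (Submodule.subset_span (Set.mem_image_of_mem v (Finset.mem_Iic.1 hm)))
  exact ⟨span_eq_top ▸ Submodule.fg_span ((Set.finite_Iic N).image v)⟩

end PowerSeries

theorem jacobian_quotient_finiteDimensional_general {R : Type*} [CommRing R] {k : ℕ} (hk : 3 ≤ k)
    {a : Fin 3 → MvPowerSeries (Fin 3) R} (ha : ∀ i, IsUnit (a i)) :
    Module.Finite R (MvPowerSeries (Fin 3) R ⧸ Ideal.span
      {-(X 1 * X 2) + a 0 * X 0 ^ k, -(X 0 * X 2) + a 1 * X 1 ^ k,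
        -(X 0 * X 1) + a 2 * X 2 ^ k}) := by
  set I : Ideal (MvPowerSeries (Fin 3) R) := Ideal.span _
  have h₀ : -(X 1 * X 2) + a 0 * X 0 ^ k ∈ I := Ideal.subset_span (by simp)
  have h₁ : -(X 0 * X 2) + a 1 * X 1 ^ k ∈ I := Ideal.subset_span (by simp)
  have h₂ : -(X 0 * X 1) + a 2 * X 2 ^ k ∈ I := Ideal.subset_span (by simp)
  refine finite_quotient_of_forall_X_mem_radical fun i => ⟨k + 2, ?_⟩
  have X_pow_mem {x y b c} := pow_add_two_mem_of_neg_mul_add_mul_pow_mem (I := I)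
    (x := x) (y := y) (a := b) (b := c) hk (ha i) (X_mem_jacobson i)
  fin_cases i
  · rw [mul_comm] at h₁ h₂
    exact X_pow_mem h₁ h₂ h₀
  · rw [mul_comm] at h₀
    exact X_pow_mem h₀ h₂ h₁
  · exact X_pow_mem h₀ h₁ h₂

/-- The Jacobian ideal of `W` has finite codimension: the quotient
`ℂ[[v₁,v₂,v₃]]/(∂₁W, ∂₂W, ∂₃W)` is a finite-dimensional complex vector space. -/
theorem jacobian_quotient_finiteDimensional :
    FiniteDimensional ℂ (MvPowerSeries (Fin 3) ℂ ⧸ JacobianIdeal) :=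
  jacobian_quotient_finiteDimensional_general (k := 4) (a := fun _ => 5) (by norm_num)
    fun _ => by simp [MvPowerSeries.isUnit_iff_constantCoeff, map_ofNat constantCoeff 5]
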